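/- Let G be a finite simple graph on vertex set V, let u ∈ V be an isolated vertex of G, let G' be the subgraph of G induced by V \ {u}, and let F be a field. Then minrank_F(G) = minrank_F(G') + 1. -/

import Mathlib

/-- `A` represents `G` over `F` if all diagonal entries of `A` are nonzero and `A i j = 0`
for all distinct non-adjacent vertices `i`, `j`. The minrank of `G` over `F` is the minimum
rank of a matrix representing `G` over `F`. -/
noncomputable def minrank (F : Type*) [Field F] {V : Type*} [Fintype V] [DecidableEq V]
    (G : SimpleGraph V) : ℕ :=
  sInf {r | ∃ A : Matrix V V F, (∀ i, A i i ≠ 0) ∧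
    (∀ i j, i ≠ j → ¬ G.Adj i j → A i j = 0) ∧ A.rank = r}

/-!
Minrank is additive over disjoint unions of graphs: the matrices representing `G ⊕g H` are exactly
the block diagonal ones whose two blocks represent `G` and `H`, and the rank of a block diagonal
matrix is the sum of the ranks of its blocks. A graph with an isolated vertex is the disjoint union
of the rest of the graph and a single vertex, whose minrank is `1`.
-/

open Matrix Module SimpleGraph

theorem finrank_submodule_prod {R M N : Type*} [Ring R] [StrongRankCondition R]
    [AddCommGroup M] [Module R M] [AddCommGroup N] [Module R N]
    (p : Submodule R M) (q : Submodule R N)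
    [Module.Free R p] [Module.Finite R p] [Module.Free R q] [Module.Finite R q] :
    finrank R (p.prod q) = finrank R p + finrank R q := by
  have range_eq : (p.subtype.prodMap q.subtype).range = p.prod q := by
    rw [LinearMap.range_prodMap, p.range_subtype, q.range_subtype]
  have injective : Function.Injective (p.subtype.prodMap q.subtype) :=
    p.injective_subtype.prodMap q.injective_subtype
  rw [← range_eq, LinearMap.finrank_range_of_inj injective, finrank_prod]

theorem mulVecLin_fromBlocks_zero₁₂_zero₂₁ {m n o p R : Type*} [CommSemiring R]
    [Fintype n] [Fintype p] (A : Matrix m n R) (D : Matrix o p R) :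
    (fromBlocks A 0 0 D).mulVecLin =
      (LinearEquiv.sumArrowLequivProdArrow m o R R).symm.toLinearMap ∘ₗ
        A.mulVecLin.prodMap D.mulVecLin ∘ₗ
          (LinearEquiv.sumArrowLequivProdArrow n p R R).toLinearMap := by
  refine LinearMap.ext fun x => ?_
  rw [mulVecLin_apply, fromBlocks_mulVec, zero_mulVec, zero_mulVec, add_zero, zero_add]
  rfl

theorem rank_fromBlocks_zero₁₂_zero₂₁ {m n o p K : Type*} [Field K] [Fintype n] [Fintype p]
    (A : Matrix m n K) (D : Matrix o p K) :
    (fromBlocks A 0 0 D).rank = A.rank + D.rank := by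
  rw [Matrix.rank, mulVecLin_fromBlocks_zero₁₂_zero₂₁, LinearMap.range_comp,
    LinearEquiv.finrank_map_eq, LinearEquiv.range_comp, LinearMap.range_prodMap,
    finrank_submodule_prod, Matrix.rank, Matrix.rank]

/-- The matrix `A` represents the graph `G`: its diagonal has no zero entry, and its off-diagonal
entries vanish outside the edges of `G`. These are the matrices over which `minrank` minimizes the
rank; `A` need not be symmetric. -/
structure RepresentsGraph {V R : Type*} [Zero R] (A : Matrix V V R) (G : SimpleGraph V) : Prop where
  diag_ne_zero : ∀ i, A i i ≠ 0
  eq_zero_of_not_adj : ∀ i j, i ≠ j → ¬ G.Adj i j → A i j = 0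

namespace RepresentsGraph

variable {V W R : Type*} {G : SimpleGraph V} {H : SimpleGraph W}

theorem one [DecidableEq V] [Zero R] [One R] [NeZero (1 : R)] (G : SimpleGraph V) :
    RepresentsGraph (1 : Matrix V V R) G where
  diag_ne_zero i := by rw [one_apply_eq]; exact one_ne_zero
  eq_zero_of_not_adj _ _ hij _ := one_apply_ne hij

variable [Zero R]

theorem submatrix {A : Matrix V V R} (hA : RepresentsGraph A G) (f : H ↪g G) :
    RepresentsGraph (A.submatrix f f) H where
  diag_ne_zero i := hA.diag_ne_zero (f i)
  eq_zero_of_not_adj i j hij hadj :=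
    hA.eq_zero_of_not_adj (f i) (f j) (f.injective.ne hij) (f.map_adj_iff.not.mpr hadj)

theorem eq_diagonal [DecidableEq V] {A : Matrix V V R}
    (hA : RepresentsGraph A (⊥ : SimpleGraph V)) : A = diagonal A.diag := by
  ext i j
  obtain rfl | hij := eq_or_ne i j
  · rw [diagonal_apply_eq, diag_apply]
  · rw [diagonal_apply_ne _ hij, hA.eq_zero_of_not_adj i j hij not_false]

end RepresentsGraph

theorem representsGraph_fromBlocks_iff {V W R : Type*} [Zero R]
    {G : SimpleGraph V} {H : SimpleGraph W}
    {A : Matrix V V R} {B : Matrix V W R} {C : Matrix W V R} {D : Matrix W W R} :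
    RepresentsGraph (fromBlocks A B C D) (G ⊕g H) ↔
      RepresentsGraph A G ∧ B = 0 ∧ C = 0 ∧ RepresentsGraph D H := by
  constructor
  · intro h
    refine ⟨h.submatrix Embedding.sumInl, ?_, ?_, h.submatrix Embedding.sumInr⟩
    · ext i j
      exact h.eq_zero_of_not_adj (.inl i) (.inr j) Sum.inl_ne_inr (by simp)
    · ext i j
      exact h.eq_zero_of_not_adj (.inr i) (.inl j) Sum.inr_ne_inl (by simp)
  · rintro ⟨hA, rfl, rfl, hD⟩
    constructor
    · rintro (i | i)
      exacts [hA.diag_ne_zero i, hD.diag_ne_zero i]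
    · rintro (i | i) (j | j) hij hadj
      · exact hA.eq_zero_of_not_adj i j (ne_of_apply_ne Sum.inl hij) hadj
      · rfl
      · rfl
      · exact hD.eq_zero_of_not_adj i j (ne_of_apply_ne Sum.inr hij) hadj

section Minrank

variable {F V W : Type*} [Field F] [Fintype V] [DecidableEq V] [Fintype W] [DecidableEq W]
  {G : SimpleGraph V} {H : SimpleGraph W}

variable (F G) in
theorem minrank_eq_sInf_image_rank :
    minrank F G = sInf (Matrix.rank '' {A : Matrix V V F | RepresentsGraph A G}) := by
  refine congrArg sInf (Set.ext fun r => ⟨?_, ?_⟩)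
  · rintro ⟨A, hdiag, hzero, hrank⟩
    exact ⟨A, ⟨hdiag, hzero⟩, hrank⟩
  · rintro ⟨A, ⟨hdiag, hzero⟩, hrank⟩
    exact ⟨A, hdiag, hzero, hrank⟩

theorem RepresentsGraph.minrank_le_rank {A : Matrix V V F} (hA : RepresentsGraph A G) :
    minrank F G ≤ A.rank := by
  rw [minrank_eq_sInf_image_rank]
  exact Nat.sInf_le (Set.mem_image_of_mem _ hA)

variable (F G) in
theorem exists_representsGraph_rank_eq_minrank :
    ∃ A : Matrix V V F, RepresentsGraph A G ∧ A.rank = minrank F G := by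
  rw [minrank_eq_sInf_image_rank]
  exact Nat.sInf_mem (Set.Nonempty.image _ ⟨1, RepresentsGraph.one G⟩)

variable (F) in
theorem minrank_le_of_embedding (f : H ↪g G) : minrank F H ≤ minrank F G := by
  obtain ⟨A, hA, hrank⟩ := exists_representsGraph_rank_eq_minrank F G
  calc
    minrank F H ≤ (A.submatrix f f).rank := (hA.submatrix f).minrank_le_rank
    _ ≤ A.rank := rank_submatrix_le A f f
    _ = minrank F G := hrank

variable (F) in
theorem minrank_congr (e : G ≃g H) : minrank F G = minrank F H :=
  (minrank_le_of_embedding F e.toEmbedding).antisymm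
    (minrank_le_of_embedding F e.symm.toEmbedding)

variable (F V) in
theorem minrank_bot : minrank F (⊥ : SimpleGraph V) = Fintype.card V := by
  classical
  obtain ⟨A, hA, hrank⟩ := exists_representsGraph_rank_eq_minrank F (⊥ : SimpleGraph V)
  rw [← hrank, hA.eq_diagonal, rank_diagonal]
  exact Fintype.card_of_subtype Finset.univ fun i => by simpa using hA.diag_ne_zero i

variable (F G H) in
theorem minrank_sum : minrank F (G ⊕g H) = minrank F G + minrank F H := by
  apply le_antisymm
  · obtain ⟨A, hA, hA_rank⟩ := exists_representsGraph_rank_eq_minrank F G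
    obtain ⟨D, hD, hD_rank⟩ := exists_representsGraph_rank_eq_minrank F H
    rw [← hA_rank, ← hD_rank, ← rank_fromBlocks_zero₁₂_zero₂₁]
    exact (representsGraph_fromBlocks_iff.mpr ⟨hA, rfl, rfl, hD⟩).minrank_le_rank
  · obtain ⟨M, hM, hM_rank⟩ := exists_representsGraph_rank_eq_minrank F (G ⊕g H)
    rw [← M.fromBlocks_toBlocks, representsGraph_fromBlocks_iff] at hM
    obtain ⟨hA, hB, hC, hD⟩ := hM
    rw [← hM_rank, ← M.fromBlocks_toBlocks, hB, hC, rank_fromBlocks_zero₁₂_zero₂₁]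
    exact add_le_add hA.minrank_le_rank hD.minrank_le_rank

end Minrank

/-- The decomposition of `G` as the disjoint union of the subgraphs induced by two complementary
vertex sets `s` and `t` with no edges between them; the underlying map is the inclusion of each
part into `V`. -/
noncomputable def sumInduceIso {V : Type*} (G : SimpleGraph V) {s t : Set V} (hst : IsCompl s t)
    (hG : ∀ a ∈ s, ∀ b ∈ t, ¬ G.Adj a b) : G.induce s ⊕g G.induce t ≃g G where
  toEquiv := Equiv.ofBijective (Sum.elim Subtype.val Subtype.val) <| by
    constructor
    · exact Subtype.val_injective.sumElim Subtype.val_injective fun a b =>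
        hst.disjoint.ne_of_mem a.2 b.2
    · rw [← Set.range_eq_univ, Set.Sum.elim_range, Subtype.range_val, Subtype.range_val]
      exact hst.sup_eq_top
  map_rel_iff' := by
    rintro (a | a) (b | b)
    · exact Iff.rfl
    · exact iff_of_false (hG a a.2 b b.2) (by simp)
    · exact iff_of_false (fun hab => hG b b.2 a a.2 hab.symm) (by simp)
    · exact Iff.rfl

/-- Removing an isolated vertex decreases the minrank by exactly one. -/
theorem minrank_of_isolated {V : Type*} [Fintype V] [DecidableEq V] (G : SimpleGraph V)
    (u : V) (hu : ∀ v, ¬ G.Adj u v) (F : Type*) [Field F] :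
    minrank F G =
      minrank F (G.induce ((Finset.univ.erase u : Finset V) : Set V)) + 1 := by
  have isCompl : IsCompl ((Finset.univ.erase u : Finset V) : Set V) {u} := by
    rw [← Finset.compl_singleton, Finset.coe_compl, Finset.coe_singleton]
    exact isCompl_compl.symm
  have no_edges : ∀ a ∈ ((Finset.univ.erase u : Finset V) : Set V), ∀ b ∈ ({u} : Set V),
      ¬ G.Adj a b := by
    rintro a - b rfl hab
    exact hu a hab.symm
  have induce_singleton : G.induce {u} = ⊥ := Subsingleton.elim _ _
  rw [← minrank_congr F (sumInduceIso G isCompl no_edges), minrank_sum, induce_singleton,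
    minrank_bot, Fintype.card_unique]
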